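/- arXiv:0910.2186 — 6 statements merged into one kernel-verified Lean document; each statement's English description precedes it below -/
import Mathlib

section
/- Let d ≥ 1, let (Ω, F, P) be a probability space, and let X : ℝ^d × Ω → ℝ be a jointly measurable, stationary random field. Then X is continuous in probability: for every t₀ ∈ ℝ^d and every ε > 0, P(|X(t, ·) − X(t₀, ·)| > ε) → 0 as t → t₀ in ℝ^d. -/
open MeasureTheory Filter

theorem aux_translation {d : ℕ} (f : (Fin d → ℝ) → ℝ) (hf : Integrable f volume)
    (t₀ : Fin d → ℝ) :
    Tendsto (fun t : Fin d → ℝ => ∫⁻ s, ‖f (t + s) - f (t₀ + s)‖ₑ) (nhds t₀) (nhds 0) := by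
  have hm : MemLp f 1 volume := memLp_one_iff_integrable.2 hf
  let g : (Fin d → ℝ) → C(Fin d → ℝ, Fin d → ℝ) := fun t => ⟨fun s => t + s, by fun_prop⟩
  have hg : Continuous g := by
    apply ContinuousMap.continuous_of_continuous_uncurry
    simp only [g, Function.uncurry_def, ContinuousMap.coe_mk]
    fun_prop
  have hgm : ∀ t, MeasurePreserving (g t) volume volume := fun t =>
    measurePreserving_add_left volume t
  have h := Filter.Tendsto.compMeasurePreservingLp (f := fun _ => hm.toLp f)
    (f₀ := hm.toLp f) tendsto_const_nhds (hg.tendsto t₀) hgm (hgm t₀) (by simp)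
  rw [tendsto_iff_edist_tendsto_0] at h
  refine h.congr fun t => ?_
  rw [Lp.toLp_compMeasurePreserving, Lp.toLp_compMeasurePreserving, Lp.edist_toLp_toLp,
    eLpNorm_one_eq_lintegral_enorm]
  rfl

theorem aux_arctan_bound (x : ℝ) : ‖Real.arctan x‖ₑ ≤ 2 := by
  have h1 := Real.arctan_lt_pi_div_two x
  have h2 := Real.neg_pi_div_two_lt_arctan x
  have h3 := Real.pi_le_four
  have : ‖Real.arctan x‖ ≤ 2 := by
    rw [Real.norm_eq_abs, abs_le]; constructor <;> linarith
  rw [← ofReal_norm]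
  exact (ENNReal.ofReal_le_ofReal this).trans (by simp)

theorem aux_L1
    (d : ℕ)
    {Ω : Type*} [MeasurableSpace Ω] (P : Measure Ω) [IsProbabilityMeasure P]
    (X : (Fin d → ℝ) → Ω → ℝ)
    (hXmeas : Measurable (fun p : (Fin d → ℝ) × Ω => X p.1 p.2))
    (hstat : ∀ t : Fin d → ℝ,
      Measure.map (fun ω => (fun s : Fin d → ℝ => X (s + t) ω)) P
        = Measure.map (fun ω => (fun s : Fin d → ℝ => X s ω)) P)
    (t₀ : Fin d → ℝ) :
    Tendsto (fun t : Fin d → ℝ => ∫⁻ ω, ‖Real.arctan (X t ω) - Real.arctan (X t₀ ω)‖ₑ ∂P)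
        (nhds t₀) (nhds 0) := by
  have hX : ∀ t, Measurable (X t) := fun t => hXmeas.comp measurable_prodMk_left
  have hXs : ∀ ω, Measurable (fun s => X s ω) := fun ω => hXmeas.comp measurable_prodMk_right
  set K : Set (Fin d → ℝ) := Metric.closedBall t₀ 2 with hK
  set B : Set (Fin d → ℝ) := Metric.ball 0 1 with hB
  have hKm : MeasurableSet K := Metric.isClosed_closedBall.measurableSet
  have hBm : MeasurableSet B := Metric.isOpen_ball.measurableSet
  have hKfin : volume K < ⊤ := measure_closedBall_lt_top
  have hBfin : volume B < ⊤ := measure_ball_lt_top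
  have hBpos : 0 < volume B := Metric.measure_ball_pos _ _ one_pos
  let Z : Ω → (Fin d → ℝ) → ℝ := fun ω => K.indicator (fun s => Real.arctan (X s ω))
  have hZm : Measurable (fun p : (Fin d → ℝ) × Ω => Z p.2 p.1) := by
    have : (fun p : (Fin d → ℝ) × Ω => Z p.2 p.1) =
        (Prod.fst ⁻¹' K).indicator (fun p : (Fin d → ℝ) × Ω => Real.arctan (X p.1 p.2)) := by
      ext p; rfl
    rw [this]
    exact (Real.measurable_arctan.comp hXmeas).indicator (measurable_fst hKm)
  have hZs : ∀ ω, Measurable (Z ω) := fun ω => hZm.comp measurable_prodMk_right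
  have hZb : ∀ ω, ∫⁻ s, ‖Z ω s‖ₑ ≤ 2 * volume K := by
    intro ω
    calc ∫⁻ s, ‖Z ω s‖ₑ ≤ ∫⁻ s, K.indicator (fun _ => 2) s := by
          apply lintegral_mono
          intro s
          by_cases hs : s ∈ K
          · simp [Z, hs, aux_arctan_bound]
          · simp [Z, hs]
      _ = 2 * volume K := lintegral_indicator_const hKm 2
  have hZi : ∀ ω, Integrable (Z ω) volume := fun ω =>
    ⟨(hZs ω).aestronglyMeasurable, (hZb ω).trans_lt (ENNReal.mul_lt_top (by simp) hKfin)⟩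
  have hshift : ∀ (t : Fin d → ℝ) ω, ∫⁻ s, ‖Z ω (t + s)‖ₑ = ∫⁻ s, ‖Z ω s‖ₑ := fun t ω =>
    lintegral_add_left_eq_self (fun s => ‖Z ω s‖ₑ) t
  have hF : ∀ t : Fin d → ℝ, Measurable
      (fun p : Ω × (Fin d → ℝ) => ‖Z p.1 (t + p.2) - Z p.1 (t₀ + p.2)‖ₑ) := by
    intro t
    have h (u : Fin d → ℝ) : Measurable (fun p : Ω × (Fin d → ℝ) => Z p.1 (u + p.2)) :=
      hZm.comp (f := fun p : Ω × (Fin d → ℝ) => (u + p.2, p.1)) (by fun_prop)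
    exact ((h t).sub (h t₀)).enorm
  have hlim : Tendsto (fun t => ∫⁻ ω, (∫⁻ s, ‖Z ω (t + s) - Z ω (t₀ + s)‖ₑ) ∂P)
      (nhds t₀) (nhds (∫⁻ _ω, 0 ∂P)) := by
    apply tendsto_lintegral_filter_of_dominated_convergence
      (fun _ => 2 * volume K + 2 * volume K)
    · exact .of_forall fun t => (hF t).lintegral_prod_right'
    · refine .of_forall fun t => .of_forall fun ω => ?_
      calc ∫⁻ s, ‖Z ω (t + s) - Z ω (t₀ + s)‖ₑ
          ≤ ∫⁻ s, (‖Z ω (t + s)‖ₑ + ‖Z ω (t₀ + s)‖ₑ) :=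
            lintegral_mono fun s => enorm_sub_le
        _ = (∫⁻ s, ‖Z ω (t + s)‖ₑ) + (∫⁻ s, ‖Z ω (t₀ + s)‖ₑ) :=
            lintegral_add_left ((hZs ω).comp (measurable_const_add t)).enorm _
        _ ≤ _ := by
          rw [hshift, hshift]
          exact add_le_add (hZb ω) (hZb ω)
    · simp only [lintegral_const, measure_univ, mul_one]
      exact (ENNReal.add_lt_top.2 ⟨ENNReal.mul_lt_top (by simp) hKfin,
        ENNReal.mul_lt_top (by simp) hKfin⟩).ne
    · exact .of_forall fun ω => aux_translation _ (hZi ω) t₀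
  rw [lintegral_zero] at hlim
  have hst : ∀ t s : Fin d → ℝ,
      ∫⁻ ω, ‖Real.arctan (X (t + s) ω) - Real.arctan (X (t₀ + s) ω)‖ₑ ∂P
        = ∫⁻ ω, ‖Real.arctan (X t ω) - Real.arctan (X t₀ ω)‖ₑ ∂P := by
    intro t s
    let G : ((Fin d → ℝ) → ℝ) → ENNReal := fun x => ‖Real.arctan (x t) - Real.arctan (x t₀)‖ₑ
    have hG : Measurable G :=
      ((Real.measurable_arctan.comp (measurable_pi_apply t)).sub
        (Real.measurable_arctan.comp (measurable_pi_apply t₀))).enorm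
    have h1 := lintegral_map (μ := P) hG
      (g := fun ω => (fun u : Fin d → ℝ => X (u + s) ω)) (measurable_pi_lambda _ fun u => hX _)
    have h2 := lintegral_map (μ := P) hG
      (g := fun ω => (fun u : Fin d → ℝ => X u ω)) (measurable_pi_lambda _ fun u => hX _)
    rw [hstat s] at h1
    exact h1.symm.trans h2
  have hkey : ∀ t ∈ Metric.ball t₀ 1,
      volume B * ∫⁻ ω, ‖Real.arctan (X t ω) - Real.arctan (X t₀ ω)‖ₑ ∂P ≤
        ∫⁻ ω, (∫⁻ s, ‖Z ω (t + s) - Z ω (t₀ + s)‖ₑ) ∂P := by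
    intro t ht
    have hmem : ∀ s ∈ B, t + s ∈ K ∧ t₀ + s ∈ K := by
      intro s hs
      have hs' : ‖s‖ < 1 := by simpa [hB] using hs
      have ht' : ‖t - t₀‖ < 1 := by simpa [dist_eq_norm] using ht
      simp only [hK, Metric.mem_closedBall, dist_eq_norm]
      constructor
      · have : t + s - t₀ = (t - t₀) + s := by abel
        rw [this]
        linarith [norm_add_le (t - t₀) s]
      · simp; linarith
    calc volume B * ∫⁻ ω, ‖Real.arctan (X t ω) - Real.arctan (X t₀ ω)‖ₑ ∂P
        = ∫⁻ s in B, ∫⁻ ω, ‖Real.arctan (X (t + s) ω) - Real.arctan (X (t₀ + s) ω)‖ₑ ∂P := by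
          simp only [hst t, lintegral_const, Measure.restrict_apply_univ]
          rw [mul_comm]
      _ = ∫⁻ s in B, ∫⁻ ω, ‖Z ω (t + s) - Z ω (t₀ + s)‖ₑ ∂P := by
          refine setLIntegral_congr_fun hBm fun s hs => ?_
          simp [Z, hmem s hs]
      _ ≤ ∫⁻ s, ∫⁻ ω, ‖Z ω (t + s) - Z ω (t₀ + s)‖ₑ ∂P := setLIntegral_le_lintegral _ _
      _ = _ := (lintegral_lintegral_swap (hF t).aemeasurable).symm
  have hlim2 : Tendsto (fun t => volume B *
      ∫⁻ ω, ‖Real.arctan (X t ω) - Real.arctan (X t₀ ω)‖ₑ ∂P) (nhds t₀) (nhds 0) :=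
    tendsto_of_tendsto_of_tendsto_of_le_of_le' tendsto_const_nhds hlim
      (.of_forall fun _ => zero_le) (by
        filter_upwards [Metric.ball_mem_nhds t₀ one_pos] with t ht using hkey t ht)
  have h3 := ENNReal.Tendsto.const_mul (a := (volume B)⁻¹) hlim2
    (Or.inr (ENNReal.inv_ne_top.2 hBpos.ne'))
  simpa [← mul_assoc, ENNReal.inv_mul_cancel hBpos.ne' hBfin.ne] using h3

/-- A jointly measurable, stationary random field `X : ℝ^d × Ω → ℝ`
on a probability space is continuous in probability. -/
theorem stationary_measurable_field_continuous_in_probability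
    (d : ℕ) (hd : 1 ≤ d)
    {Ω : Type*} [MeasurableSpace Ω] (P : Measure Ω) [IsProbabilityMeasure P]
    (X : (Fin d → ℝ) → Ω → ℝ)
    (hXmeas : Measurable (fun p : (Fin d → ℝ) × Ω => X p.1 p.2))
    (hstat : ∀ t : Fin d → ℝ,
      Measure.map (fun ω => (fun s : Fin d → ℝ => X (s + t) ω)) P
        = Measure.map (fun ω => (fun s : Fin d → ℝ => X s ω)) P) :
    ∀ (t₀ : Fin d → ℝ) (ε : ℝ), 0 < ε →
      Tendsto (fun t : Fin d → ℝ => P {ω | ε < |X t ω - X t₀ ω|})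
        (nhds t₀) (nhds 0) := by
  intro t₀ ε hε
  have hX : ∀ t, Measurable (X t) := fun t => hXmeas.comp measurable_prodMk_left
  have hL := aux_L1 d P X hXmeas hstat t₀
  apply tendsto_of_subseq_tendsto
  intro u hu
  have hY : TendstoInMeasure P (fun n ω => Real.arctan (X (u n) ω)) atTop
      (fun ω => Real.arctan (X t₀ ω)) := by
    apply tendstoInMeasure_of_tendsto_eLpNorm (p := 1) one_ne_zero
    · exact fun n => (Real.measurable_arctan.comp (hX _)).aestronglyMeasurable
    · exact (Real.measurable_arctan.comp (hX _)).aestronglyMeasurable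
    · simp only [eLpNorm_one_eq_lintegral_enorm]
      exact hL.comp hu
  obtain ⟨ns, -, hns⟩ := hY.exists_seq_tendsto_ae
  refine ⟨ns, ?_⟩
  have hXc : TendstoInMeasure P (fun n => X (u (ns n))) atTop (X t₀) := by
    apply tendstoInMeasure_of_tendsto_ae (fun n => (hX _).aestronglyMeasurable)
    filter_upwards [hns] with ω hω
    have hc : ContinuousAt Real.tan (Real.arctan (X t₀ ω)) :=
      Real.continuousAt_tan.2 (Real.cos_arctan_pos _).ne'
    simpa [Function.comp_def, Real.tan_arctan] using hc.tendsto.comp hω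
  refine tendsto_of_tendsto_of_tendsto_of_le_of_le tendsto_const_nhds
    (tendstoInMeasure_iff_norm.1 hXc ε hε) (fun _ => zero_le) fun n => ?_
  exact measure_mono fun ω (hω : ε < |X (u (ns n)) ω - X t₀ ω|) => hω.le
end

section
/- Let d ≥ 1, let (S, 𝒮) be a measurable space, let φ be a jointly measurable ℝ^d-action on S, and let w be a cocycle for φ. Let h : S → [0, ∞] be measurable and let n ∈ ℕ. Then for every s ∈ S, ∫_{ℝ^d} h(φ(t, s)) w(t, s) dt = Σ_{γ ∈ ℤ^d} h_n(φ(2^{-n} γ, s)) · w(2^{-n} γ, s), where both sides are interpreted as values in [0, ∞] (the integral is the Lebesgue integral of a nonnegative measurable function and the sum is an unordered sum over ℤ^d). -/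
open MeasureTheory Filter

noncomputable section

/-- The cube `[0, 2^{-n})^d ⊆ ℝ^d`. -/
def smallCube (d n : ℕ) : Set (Fin d → ℝ) :=
  Set.univ.pi fun _ => Set.Ico (0 : ℝ) ((2 : ℝ) ^ n)⁻¹

/-- The lattice point `2^{-n} γ ∈ ℝ^d` for `γ ∈ ℤ^d`. -/
def latticePt {d : ℕ} (n : ℕ) (γ : Fin d → ℤ) : Fin d → ℝ :=
  fun i => ((2 : ℝ) ^ n)⁻¹ * (γ i : ℝ)

/-- `h_n(s) := ∫_{[0,2^{-n})^d} h(φ(t,s)) w(t,s) dt`. -/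
def hTile {S : Type*} {d : ℕ} (n : ℕ) (φ : (Fin d → ℝ) → S → S)
    (w : (Fin d → ℝ) → S → ℝ) (h : S → ENNReal) (s : S) : ENNReal :=
  ∫⁻ t in smallCube d n, h (φ t s) * ENNReal.ofReal (w t s)

/-- For a jointly measurable `ℝ^d`-action `φ` with cocycle `w` and
measurable `h : S → [0,∞]`, the integral `∫_{ℝ^d} h(φ(t,s)) w(t,s) dt` equals the sum
`Σ_{γ ∈ ℤ^d} h_n(φ(2^{-n}γ, s)) w(2^{-n}γ, s)`. -/
theorem lintegral_eq_tsum_hTile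
    (d : ℕ) (hd : 1 ≤ d)
    {S : Type*} [MeasurableSpace S]
    (φ : (Fin d → ℝ) → S → S)
    (hφmeas : Measurable (Function.uncurry φ))
    (hφ0 : ∀ s, φ 0 s = s)
    (hφadd : ∀ (u v : Fin d → ℝ) (s : S), φ (u + v) s = φ u (φ v s))
    (w : (Fin d → ℝ) → S → ℝ)
    (hwmeas : Measurable (Function.uncurry w))
    (hwpos : ∀ t s, 0 < w t s)
    (hcoc : ∀ (t h : Fin d → ℝ) (s : S), w (t + h) s = w h s * w t (φ h s))
    (h : S → ENNReal) (hh : Measurable h) (n : ℕ) (s : S) :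
    (∫⁻ t, h (φ t s) * ENNReal.ofReal (w t s)) =
      ∑' γ : Fin d → ℤ,
        hTile n φ w h (φ (latticePt n γ) s)
          * ENNReal.ofReal (w (latticePt n γ) s) := by
  have hF : Measurable fun t => h (φ t s) * ENNReal.ofReal (w t s) := by
    have h1 : Measurable fun t => φ t s := hφmeas.comp (measurable_id.prodMk measurable_const)
    have h2 : Measurable fun t => w t s := hwmeas.comp (measurable_id.prodMk measurable_const)
    exact (hh.comp h1).mul h2.ennreal_ofReal
  have hcube : MeasurableSet (smallCube d n) :=
    MeasurableSet.univ_pi fun _ => measurableSet_Ico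
  have hc : (0 : ℝ) < ((2 : ℝ) ^ n)⁻¹ := by positivity
  have hmem : ∀ (γ : Fin d → ℤ) (t : Fin d → ℝ),
      t - latticePt n γ ∈ smallCube d n ↔ γ = fun i => ⌊t i * (2 : ℝ) ^ n⌋ := by
    intro γ t
    have h2 : (0 : ℝ) < (2 : ℝ) ^ n := by positivity
    simp only [smallCube, latticePt, Set.mem_univ_pi, Set.mem_Ico, Pi.sub_apply, funext_iff]
    refine forall_congr' fun i => ?_
    rw [eq_comm, Int.floor_eq_iff, inv_mul_eq_div, sub_nonneg, div_le_iff₀ h2, sub_lt_iff_lt_add,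
      inv_eq_one_div, ← add_div, lt_div_iff₀ h2, add_comm (1 : ℝ)]
  let T : (Fin d → ℤ) → Set (Fin d → ℝ) := fun γ => (fun t => t - latticePt n γ) ⁻¹' smallCube d n
  have hT : ∀ γ, MeasurableSet (T γ) := fun γ => (measurable_id.sub_const _) hcube
  have hU : (⋃ γ, T γ) = Set.univ := by
    ext t
    simp only [Set.mem_iUnion, Set.mem_univ, iff_true]
    exact ⟨_, (hmem _ t).2 rfl⟩
  have hD : Pairwise (Function.onFun Disjoint T) := by
    intro a b hab
    refine Set.disjoint_left.2 fun t ha hb => hab ?_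
    exact ((hmem _ t).1 ha).trans ((hmem _ t).1 hb).symm
  rw [← setLIntegral_univ, ← hU, lintegral_iUnion hT hD]
  refine tsum_congr fun γ => ?_
  unfold hTile
  rw [← lintegral_mul_const' _ _ ENNReal.ofReal_ne_top, ← lintegral_indicator (hT γ),
    ← lintegral_indicator hcube, ← lintegral_add_right_eq_self _ (latticePt n γ)]
  refine lintegral_congr fun t => ?_
  by_cases ht : t ∈ smallCube d n
  · have ht' : t + latticePt n γ ∈ T γ := by simpa [T] using ht
    rw [Set.indicator_of_mem ht, Set.indicator_of_mem ht', hφadd, hcoc,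
      ENNReal.ofReal_mul (hwpos _ _).le]
    ring
  · have ht' : t + latticePt n γ ∉ T γ := by simpa [T] using ht
    rw [Set.indicator_of_notMem ht, Set.indicator_of_notMem ht']
end
end

section
/- Let d ≥ 1, let (S, 𝒮) be a measurable space, let φ be a jointly measurable ℝ^d-action on S, and let w be a cocycle for φ. Let h : S → [0, ∞] be measurable. Then for all m, n ∈ ℕ, the sets {s ∈ S : Σ_{γ ∈ ℤ^d} h_n(φ(2^{-n} γ, s)) w(2^{-n} γ, s) = ∞} and {s ∈ S : Σ_{γ ∈ ℤ^d} h_m(φ(2^{-m} γ, s)) w(2^{-m} γ, s) = ∞} are equal, and both coincide with the set {s ∈ S : ∫_{ℝ^d} h(φ(t, s)) w(t, s) dt = ∞}. -/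
open MeasureTheory Filter

noncomputable section

theorem mem_smallCube_iff_aux {d : ℕ} (n : ℕ) (γ : Fin d → ℤ) (t : Fin d → ℝ) :
    t - latticePt n γ ∈ smallCube d n ↔ (fun i => ⌊(2 : ℝ) ^ n * t i⌋) = γ := by
  have hp : (0 : ℝ) < 2 ^ n := by positivity
  simp only [smallCube, latticePt, Set.mem_pi, Set.mem_univ, true_imp_iff, Set.mem_Ico,
    Pi.sub_apply, funext_iff, Int.floor_eq_iff]
  refine forall_congr' fun i => ?_
  have e : t i - ((2 : ℝ) ^ n)⁻¹ * (γ i : ℝ) = ((2 : ℝ) ^ n)⁻¹ * (2 ^ n * t i - γ i) := by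
    field_simp
  have hq : (0 : ℝ) < ((2 : ℝ) ^ n)⁻¹ := by positivity
  rw [e, mul_nonneg_iff_of_pos_left hq, mul_lt_iff_lt_one_right hq]
  constructor <;> rintro ⟨h1, h2⟩ <;> constructor <;> linarith

theorem tsum_hTile_eq_aux
    (d : ℕ) {S : Type*} [MeasurableSpace S]
    (φ : (Fin d → ℝ) → S → S)
    (hφadd : ∀ (u v : Fin d → ℝ) (s : S), φ (u + v) s = φ u (φ v s))
    (w : (Fin d → ℝ) → S → ℝ)
    (hwpos : ∀ t s, 0 < w t s)
    (hcoc : ∀ (t h : Fin d → ℝ) (s : S), w (t + h) s = w h s * w t (φ h s))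
    (h : S → ENNReal) (n : ℕ) (s : S) :
    (∑' γ : Fin d → ℤ, hTile n φ w h (φ (latticePt n γ) s)
            * ENNReal.ofReal (w (latticePt n γ) s))
      = ∫⁻ t, h (φ t s) * ENNReal.ofReal (w t s) := by
  have hcube : MeasurableSet (smallCube d n) :=
    MeasurableSet.univ_pi fun _ => measurableSet_Ico
  set C : (Fin d → ℤ) → Set (Fin d → ℝ) := fun γ => {t | t - latticePt n γ ∈ smallCube d n}
    with hC
  have hCm : ∀ γ, MeasurableSet (C γ) := fun γ =>
    (measurable_id.sub_const (latticePt n γ)) hcube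
  have hdisj : Pairwise (Function.onFun Disjoint C) := by
    intro a b hab
    refine Set.disjoint_left.2 fun t ha hb => hab ?_
    exact ((mem_smallCube_iff_aux n a t).1 ha).symm.trans ((mem_smallCube_iff_aux n b t).1 hb)
  have hU : (⋃ γ, C γ) = Set.univ := Set.eq_univ_of_forall fun t =>
    Set.mem_iUnion.2 ⟨_, (mem_smallCube_iff_aux n _ t).2 rfl⟩
  rw [← setLIntegral_univ, ← hU, lintegral_iUnion hCm hdisj]
  refine tsum_congr fun γ => ?_
  rw [hTile, ← lintegral_mul_const' _ _ ENNReal.ofReal_ne_top, ← lintegral_indicator hcube,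
    ← lintegral_indicator (hCm γ), ← lintegral_sub_right_eq_self _ (latticePt n γ)]
  refine lintegral_congr fun t => ?_
  by_cases ht : t ∈ C γ
  · rw [Set.indicator_of_mem ht, Set.indicator_of_mem (show _ ∈ smallCube d n from ht),
      ← hφadd, mul_assoc, ← ENNReal.ofReal_mul (hwpos _ _).le,
      mul_comm (w _ _), ← hcoc, sub_add_cancel]
  · rw [Set.indicator_of_notMem ht, Set.indicator_of_notMem (show _ ∉ smallCube d n from ht)]

/-- For a jointly measurable `ℝ^d`-action `φ` with cocycle `w` and
measurable `h : S → [0,∞]`, the sets where `Σ_{γ ∈ ℤ^d} h_n(φ(2^{-n}γ,s)) w(2^{-n}γ,s) = ∞`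
do not depend on `n`, and they all coincide with the set where
`∫_{ℝ^d} h(φ(t,s)) w(t,s) dt = ∞`. -/
theorem tsum_hTile_top_set_eq
    (d : ℕ) (hd : 1 ≤ d)
    {S : Type*} [MeasurableSpace S]
    (φ : (Fin d → ℝ) → S → S)
    (hφmeas : Measurable (Function.uncurry φ))
    (hφ0 : ∀ s, φ 0 s = s)
    (hφadd : ∀ (u v : Fin d → ℝ) (s : S), φ (u + v) s = φ u (φ v s))
    (w : (Fin d → ℝ) → S → ℝ)
    (hwmeas : Measurable (Function.uncurry w))
    (hwpos : ∀ t s, 0 < w t s)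
    (hcoc : ∀ (t h : Fin d → ℝ) (s : S), w (t + h) s = w h s * w t (φ h s))
    (h : S → ENNReal) (hh : Measurable h) :
    ∀ m n : ℕ,
      ({s : S | (∑' γ : Fin d → ℤ,
          hTile n φ w h (φ (latticePt n γ) s)
            * ENNReal.ofReal (w (latticePt n γ) s)) = ⊤}
        = {s : S | (∑' γ : Fin d → ℤ,
          hTile m φ w h (φ (latticePt m γ) s)
            * ENNReal.ofReal (w (latticePt m γ) s)) = ⊤})
      ∧
      ({s : S | (∑' γ : Fin d → ℤ,
          hTile n φ w h (φ (latticePt n γ) s)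
            * ENNReal.ofReal (w (latticePt n γ) s)) = ⊤}
        = {s : S | (∫⁻ t, h (φ t s) * ENNReal.ofReal (w t s)) = ⊤}) := by
  intro m n
  simp only [tsum_hTile_eq_aux d φ hφadd w hwpos hcoc h, and_self]
end
end

section
/- Let d ≥ 1, let (S, 𝒮) be a measurable space, let φ be a jointly measurable ℝ^d-action on S, and let w be a cocycle for φ. Let f : S → ℝ be measurable, let α > 0, and let (a_γ)_{γ ∈ ℤ^d} be strictly positive real numbers with Σ_{γ ∈ ℤ^d} a_γ = 1. Define h(s) := Σ_{γ ∈ ℤ^d} a_γ ∫_{γ + [0,1)^d} w(t, s) |f(φ(t, s))|^α dt, a measurable function S → [0, ∞]. Then for every s ∈ S, Σ_{β ∈ ℤ^d} w(β, s) h(φ(β, s)) = ∫_{ℝ^d} w(t, s) |f(φ(t, s))|^α dt in [0, ∞]. In particular, the sets {s ∈ S : ∫_{ℝ^d} w(t, s) |f(φ(t, s))|^α dt = ∞} and {s ∈ S : Σ_{β ∈ ℤ^d} w(β, s) h(φ(β, s)) = ∞} are equal. -/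
open MeasureTheory Filter

noncomputable section

/-- The translated unit cube `γ + [0,1)^d ⊆ ℝ^d` for `γ ∈ ℤ^d`. -/
def unitCubeAt {d : ℕ} (γ : Fin d → ℤ) : Set (Fin d → ℝ) :=
  Set.univ.pi fun i => Set.Ico ((γ i : ℝ)) ((γ i : ℝ) + 1)

/-- `h(s) := Σ_{γ ∈ ℤ^d} a_γ ∫_{γ+[0,1)^d} w(t,s) |f(φ(t,s))|^α dt`. -/
def Hfun {S : Type*} {d : ℕ} (φ : (Fin d → ℝ) → S → S)
    (w : (Fin d → ℝ) → S → ℝ) (f : S → ℝ) (α : ℝ)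
    (a : (Fin d → ℤ) → ℝ) (s : S) : ENNReal :=
  ∑' γ : Fin d → ℤ, ENNReal.ofReal (a γ) *
    ∫⁻ t in unitCubeAt γ,
      ENNReal.ofReal (w t s) * ENNReal.ofReal (|f (φ t s)| ^ α)

theorem measurableSet_unitCubeAt {d : ℕ} (γ : Fin d → ℤ) : MeasurableSet (unitCubeAt γ) :=
  MeasurableSet.univ_pi fun _ => measurableSet_Ico

theorem mem_unitCubeAt_iff {d : ℕ} (γ : Fin d → ℤ) (t : Fin d → ℝ) :
    t ∈ unitCubeAt γ ↔ (fun i => ⌊t i⌋) = γ := by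
  simp only [unitCubeAt, Set.mem_univ_pi, Set.mem_Ico, funext_iff, Int.floor_eq_iff]

theorem tsum_unitCubeAt {d : ℕ} (G : (Fin d → ℝ) → ENNReal) :
    ∑' γ : Fin d → ℤ, ∫⁻ t in unitCubeAt γ, G t = ∫⁻ t, G t := by
  rw [← lintegral_iUnion measurableSet_unitCubeAt]
  · have : (⋃ γ : Fin d → ℤ, unitCubeAt γ) = Set.univ := by
      ext t
      simp [mem_unitCubeAt_iff]
    rw [this, Measure.restrict_univ]
  · intro γ γ' h
    refine Set.disjoint_left.2 fun t h1 h2 => h ?_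
    rw [mem_unitCubeAt_iff] at h1 h2
    exact h1.symm.trans h2

theorem lintegral_unitCubeAt_shift {d : ℕ} (G : (Fin d → ℝ) → ENNReal) (γ β : Fin d → ℤ) :
    ∫⁻ t in unitCubeAt γ, G (t + fun i => (β i : ℝ)) = ∫⁻ t in unitCubeAt (γ + β), G t := by
  rw [← lintegral_indicator (measurableSet_unitCubeAt _),
    ← lintegral_indicator (measurableSet_unitCubeAt _),
    ← lintegral_add_right_eq_self ((unitCubeAt (γ + β)).indicator _) (fun i => (β i : ℝ))]
  refine lintegral_congr fun t => ?_
  have : t ∈ unitCubeAt γ ↔ (t + fun i => (β i : ℝ)) ∈ unitCubeAt (γ + β) := by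
    simp only [mem_unitCubeAt_iff, funext_iff, Pi.add_apply, Int.floor_add_intCast,
      add_left_inj]
  by_cases h : t ∈ unitCubeAt γ
  · rw [Set.indicator_of_mem h, Set.indicator_of_mem (this.1 h)]
  · rw [Set.indicator_of_notMem h, Set.indicator_of_notMem (fun h' => h (this.2 h'))]

/-- With `h` as above, for every `s`,
`Σ_{β ∈ ℤ^d} w(β,s) h(φ(β,s)) = ∫_{ℝ^d} w(t,s) |f(φ(t,s))|^α dt`, and in particular
the sets where either side is infinite coincide. -/
theorem tsum_Hfun_eq_lintegral
    (d : ℕ) (hd : 1 ≤ d)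
    {S : Type*} [MeasurableSpace S]
    (φ : (Fin d → ℝ) → S → S)
    (hφmeas : Measurable (Function.uncurry φ))
    (hφ0 : ∀ s, φ 0 s = s)
    (hφadd : ∀ (u v : Fin d → ℝ) (s : S), φ (u + v) s = φ u (φ v s))
    (w : (Fin d → ℝ) → S → ℝ)
    (hwmeas : Measurable (Function.uncurry w))
    (hwpos : ∀ t s, 0 < w t s)
    (hcoc : ∀ (t h : Fin d → ℝ) (s : S), w (t + h) s = w h s * w t (φ h s))
    (f : S → ℝ) (hf : Measurable f) (α : ℝ) (hα : 0 < α)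
    (a : (Fin d → ℤ) → ℝ) (ha : ∀ γ, 0 < a γ) (ha1 : ∑' γ, a γ = 1) :
    (∀ s : S,
      (∑' β : Fin d → ℤ,
        ENNReal.ofReal (w (fun i => (β i : ℝ)) s)
          * Hfun φ w f α a (φ (fun i => (β i : ℝ)) s))
      = ∫⁻ t, ENNReal.ofReal (w t s) * ENNReal.ofReal (|f (φ t s)| ^ α))
    ∧
    ({s : S | (∫⁻ t, ENNReal.ofReal (w t s)
        * ENNReal.ofReal (|f (φ t s)| ^ α)) = ⊤}
      = {s : S | (∑' β : Fin d → ℤ,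
        ENNReal.ofReal (w (fun i => (β i : ℝ)) s)
          * Hfun φ w f α a (φ (fun i => (β i : ℝ)) s)) = ⊤}) := by
  have key : ∀ s : S,
      (∑' β : Fin d → ℤ,
        ENNReal.ofReal (w (fun i => (β i : ℝ)) s)
          * Hfun φ w f α a (φ (fun i => (β i : ℝ)) s))
      = ∫⁻ t, ENNReal.ofReal (w t s) * ENNReal.ofReal (|f (φ t s)| ^ α) := by
    intro s
    set G : (Fin d → ℝ) → ENNReal :=
      fun t => ENNReal.ofReal (w t s) * ENNReal.ofReal (|f (φ t s)| ^ α) with hG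
    have h1 : ∀ β : Fin d → ℤ, ENNReal.ofReal (w (fun i => (β i : ℝ)) s)
          * Hfun φ w f α a (φ (fun i => (β i : ℝ)) s)
        = ∑' γ : Fin d → ℤ, ENNReal.ofReal (a γ) * ∫⁻ t in unitCubeAt (γ + β), G t := by
      intro β
      rw [Hfun, ← ENNReal.tsum_mul_left]
      refine tsum_congr fun γ => ?_
      rw [← lintegral_unitCubeAt_shift, mul_left_comm,
        ← lintegral_const_mul' _ _ ENNReal.ofReal_ne_top]
      congr 1
      refine lintegral_congr fun t => ?_
      rw [hG]
      simp only
      rw [hcoc, hφadd, ENNReal.ofReal_mul (hwpos _ _).le, mul_assoc]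
    have hsum : Summable a := by
      by_contra h
      rw [tsum_eq_zero_of_not_summable h] at ha1
      exact zero_ne_one ha1
    simp_rw [h1]
    rw [ENNReal.tsum_comm]
    have h2 : ∀ γ : Fin d → ℤ,
        ∑' β : Fin d → ℤ, ENNReal.ofReal (a γ) * ∫⁻ t in unitCubeAt (γ + β), G t
          = ENNReal.ofReal (a γ) * ∫⁻ t, G t := by
      intro γ
      rw [ENNReal.tsum_mul_left, ← tsum_unitCubeAt G]
      congr 1
      exact (Equiv.addLeft γ).tsum_eq (fun γ => ∫⁻ t in unitCubeAt γ, G t)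
    simp_rw [h2]
    rw [ENNReal.tsum_mul_right, ← ENNReal.ofReal_tsum_of_nonneg (fun γ => (ha γ).le) hsum,
      ha1, ENNReal.ofReal_one, one_mul]
  refine ⟨key, ?_⟩
  ext s
  simp only [Set.mem_ofPred_eq, key s]
end
end

section
/- Let d ≥ 1, let (Ω, F, P) be a probability space, and let X : ℝ^d × Ω → ℝ be a jointly measurable, stationary random field such that ∫_Ω X(0, ω)² dP(ω) < ∞ (so that by stationarity X(t, ·) ∈ L²(P) for every t). Then the map t ↦ X(t, ·) from ℝ^d to L²(Ω, P) is continuous: for every t₀ ∈ ℝ^d, ∫_Ω (X(t, ω) − X(t₀, ω))² dP(ω) → 0 as t → t₀. -/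
open MeasureTheory Filter

lemma aux_sq (f : α → ℝ) [MeasurableSpace α] (μ : Measure α) :
    eLpNorm f 2 μ ^ 2 = ∫⁻ s, ‖f s‖ₑ ^ 2 ∂μ := by
  have := eLpNorm_nnreal_pow_eq_lintegral (μ := μ) (f := f) (p := 2) (by norm_num)
  simpa using this

lemma aux_translate {d : ℕ} (f : (Fin d → ℝ) → ℝ) (hf : Measurable f)
    (hfin : ∫⁻ s, ‖f s‖ₑ ^ 2 < ⊤) :
    Tendsto (fun h : Fin d → ℝ => ∫⁻ s, ‖f (h + s) - f s‖ₑ ^ 2) (nhds 0) (nhds 0) := by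
  have hm : MemLp f 2 (volume : Measure (Fin d → ℝ)) := by
    refine ⟨hf.aestronglyMeasurable, ?_⟩
    rw [← aux_sq] at hfin
    by_contra hc
    simp at hc
    simp [hc] at hfin
  have hp : ∀ h : Fin d → ℝ, MeasurePreserving (fun s : Fin d → ℝ => h + s) volume volume :=
    fun h => measurePreserving_add_left volume h
  let g : C(Fin d → ℝ, C(Fin d → ℝ, Fin d → ℝ)) :=
    (ContinuousMap.mk (fun a : (Fin d → ℝ) × (Fin d → ℝ) ↦ a.1 + a.2) (by fun_prop)).curry
  have : Fact ((1 : ENNReal) ≤ 2) := ⟨by norm_num⟩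
  have hc : Continuous (fun h : Fin d → ℝ =>
      Lp.compMeasurePreserving (g h) (hp h) (hm.toLp f)) :=
    Continuous.compMeasurePreservingLp continuous_const g.continuous hp (by norm_num)
  have ht := hc.tendsto 0
  have e : ∀ h, Lp.compMeasurePreserving (g h) (hp h) (hm.toLp f)
     = (hm.comp_measurePreserving (hp h)).toLp (fun s => f (h + s)) := fun h => rfl
  simp only [e] at ht
  rw [Lp.tendsto_Lp_iff_tendsto_eLpNorm''] at ht
  have h2 := ENNReal.Tendsto.pow (n := 2) ht
  simp only [aux_sq] at h2
  simpa using h2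

lemma aux_ineq (a b : ℝ) : ‖a - b‖ₑ ^ 2 ≤ 4 * ‖a‖ₑ ^ 2 + 4 * ‖b‖ₑ ^ 2 := by
  have h1 : ‖a - b‖ₑ ≤ ‖a‖ₑ + ‖b‖ₑ := enorm_sub_le
  rcases le_total ‖a‖ₑ ‖b‖ₑ with h | h
  · calc ‖a - b‖ₑ ^ 2 ≤ (2 * ‖b‖ₑ) ^ 2 := by
          gcongr; rw [two_mul]; exact h1.trans (by gcongr)
      _ = 4 * ‖b‖ₑ ^ 2 := by rw [mul_pow]; norm_num
      _ ≤ _ := le_add_self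
  · calc ‖a - b‖ₑ ^ 2 ≤ (2 * ‖a‖ₑ) ^ 2 := by
          gcongr; rw [two_mul]; exact h1.trans (by gcongr)
      _ = 4 * ‖a‖ₑ ^ 2 := by rw [mul_pow]; norm_num
      _ ≤ _ := le_self_add

set_option maxHeartbeats 2000000 in
/-- A jointly measurable, stationary random field `X : ℝ^d × Ω → ℝ` with
`X(0,·) ∈ L²(P)` is `L²`-continuous in the time parameter. -/
theorem stationary_measurable_field_L2_continuous
    (d : ℕ) (hd : 1 ≤ d)
    {Ω : Type*} [MeasurableSpace Ω] (P : Measure Ω) [IsProbabilityMeasure P]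
    (X : (Fin d → ℝ) → Ω → ℝ)
    (hXmeas : Measurable (fun p : (Fin d → ℝ) × Ω => X p.1 p.2))
    (hstat : ∀ t : Fin d → ℝ,
      Measure.map (fun ω => (fun s : Fin d → ℝ => X (s + t) ω)) P
        = Measure.map (fun ω => (fun s : Fin d → ℝ => X s ω)) P)
    (hL2 : (∫⁻ ω, ENNReal.ofReal ((X 0 ω) ^ 2) ∂P) < ⊤) :
    ∀ t₀ : Fin d → ℝ,
      Tendsto (fun t : Fin d → ℝ => ∫ ω, (X t ω - X t₀ ω) ^ 2 ∂P)
        (nhds t₀) (nhds 0) := by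
  have hen : ∀ x : ℝ, ENNReal.ofReal (x ^ 2) = ‖x‖ₑ ^ 2 := by
    intro x
    rw [← enorm_pow, Real.enorm_eq_ofReal (sq_nonneg x)]
  simp only [hen] at hL2
  have hX : ∀ t, Measurable (X t) := fun t => hXmeas.comp measurable_prodMk_left
  have key : ∀ (G : ((Fin d → ℝ) → ℝ) → ENNReal), Measurable G → ∀ t,
      ∫⁻ ω, G (fun s => X (s + t) ω) ∂P = ∫⁻ ω, G (fun s => X s ω) ∂P := by
    intro G hG t
    rw [← lintegral_map (μ := P) (g := fun ω => (fun s : Fin d → ℝ => X (s + t) ω)) hG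
      (measurable_pi_lambda _ fun s => hX _), hstat t,
      lintegral_map hG (measurable_pi_lambda _ fun s => hX _)]
  have s1 : ∀ h t, ∫⁻ ω, ‖X (h + t) ω - X t ω‖ₑ ^ 2 ∂P = ∫⁻ ω, ‖X h ω - X 0 ω‖ₑ ^ 2 ∂P := by
    intro h t
    simpa using key (fun x => ‖x h - x 0‖ₑ ^ 2) (by fun_prop) t
  have s2 : ∀ t, ∫⁻ ω, ‖X t ω‖ₑ ^ 2 ∂P = ∫⁻ ω, ‖X 0 ω‖ₑ ^ 2 ∂P := by
    intro t
    simpa using key (fun x => ‖x 0‖ₑ ^ 2) (by fun_prop) t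
  let B : Set (Fin d → ℝ) := Metric.ball 0 2
  have hB : MeasurableSet B := measurableSet_ball
  let f : (Fin d → ℝ) → Ω → ℝ := fun s ω => B.indicator (fun s => X s ω) s
  have hf : Measurable (fun p : (Fin d → ℝ) × Ω => f p.1 p.2) := by
    have : (fun p : (Fin d → ℝ) × Ω => f p.1 p.2)
        = (Prod.fst ⁻¹' B).indicator (fun p : (Fin d → ℝ) × Ω => X p.1 p.2) := by
      ext p; rfl
    rw [this]
    exact hXmeas.indicator (measurable_fst hB)
  let M : Ω → ENNReal := fun ω => ∫⁻ s, ‖f s ω‖ₑ ^ 2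
  have hMm : Measurable M := by
    have : Measurable (fun p : Ω × (Fin d → ℝ) => ‖f p.2 p.1‖ₑ ^ 2) :=
      ((hf.comp measurable_swap).enorm).pow_const 2
    exact this.lintegral_prod_right'
  have hMfin : ∫⁻ ω, M ω ∂P < ⊤ := by
    have e1 : ∫⁻ ω, M ω ∂P = ∫⁻ s, ∫⁻ ω, ‖f s ω‖ₑ ^ 2 ∂P :=
      (lintegral_lintegral_swap (μ := volume) (ν := P) (f := fun s ω => ‖f s ω‖ₑ ^ 2)
        (hf.enorm.pow_const 2).aemeasurable).symm
    have e2 : ∀ s, ∫⁻ ω, ‖f s ω‖ₑ ^ 2 ∂P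
        = B.indicator (fun _ => ∫⁻ ω, ‖X 0 ω‖ₑ ^ 2 ∂P) s := by
      intro s
      by_cases hs : s ∈ B
      · simp only [f, Set.indicator_of_mem hs, s2]
      · simp [f, Set.indicator_of_notMem hs]
    rw [e1]
    simp only [e2]
    rw [lintegral_indicator_const hB]
    exact ENNReal.mul_lt_top hL2 measure_ball_lt_top
  let K : (Fin d → ℝ) → Ω → ENNReal := fun h ω => ∫⁻ s, ‖f (h + s) ω - f s ω‖ₑ ^ 2
  have hfs : ∀ ω, Measurable (fun s => f s ω) := fun ω => hf.comp measurable_prodMk_right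
  have hshift : ∀ h, Measurable (fun p : (Fin d → ℝ) × Ω => f (h + p.1) p.2) := fun h =>
    hf.comp ((measurable_fst.const_add h).prodMk measurable_snd)
  have hdm : ∀ h, Measurable (fun p : (Fin d → ℝ) × Ω => ‖f (h + p.1) p.2 - f p.1 p.2‖ₑ ^ 2) :=
    fun h => ((hshift h).sub hf).enorm.pow_const 2
  have hKm : ∀ h, Measurable (K h) := fun h =>
    ((hdm h).comp measurable_swap).lintegral_prod_right'
  have hKb : ∀ h ω, K h ω ≤ 8 * M ω := by
    intro h ω
    calc K h ω ≤ ∫⁻ s, (4 * ‖f (h + s) ω‖ₑ ^ 2 + 4 * ‖f s ω‖ₑ ^ 2) :=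
          lintegral_mono fun s => aux_ineq _ _
      _ = 4 * M ω + 4 * M ω := by
          have m1 : Measurable (fun s => ‖f s ω‖ₑ ^ 2) := (hfs ω).enorm.pow_const 2
          rw [lintegral_add_right _ (m1.const_mul 4), lintegral_const_mul _ m1,
            lintegral_add_left_eq_self (fun s => 4 * ‖f s ω‖ₑ ^ 2) h, lintegral_const_mul _ m1]
      _ = 8 * M ω := by rw [← add_mul]; norm_num
  have hKt : Tendsto (fun h => ∫⁻ ω, K h ω ∂P) (nhds 0) (nhds 0) := by
    have := tendsto_lintegral_filter_of_dominated_convergence (μ := P) (l := nhds (0 : Fin d → ℝ))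
      (F := K) (f := fun _ => 0) (fun ω => 8 * M ω) (Eventually.of_forall hKm)
      (Eventually.of_forall fun h => Eventually.of_forall (hKb h))
      (by
        rw [lintegral_const_mul _ hMm]
        exact (ENNReal.mul_lt_top (by norm_num) hMfin).ne)
      (by
        filter_upwards [ae_lt_top hMm hMfin.ne] with ω hω
        exact aux_translate (fun s => f s ω) (hfs ω) hω)
    simpa using this
  let D : (Fin d → ℝ) → ENNReal := fun h => ∫⁻ ω, ‖X h ω - X 0 ω‖ₑ ^ 2 ∂P
  let v : ENNReal := volume (Metric.ball (0 : Fin d → ℝ) 1)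
  have hv0 : v ≠ 0 := (Metric.measure_ball_pos volume _ one_pos).ne'
  have hvt : v ≠ ⊤ := measure_ball_lt_top.ne
  have hle : ∀ h ∈ Metric.ball (0 : Fin d → ℝ) 1, D h ≤ v⁻¹ * ∫⁻ ω, K h ω ∂P := by
    intro h hh
    have e1 : ∫⁻ ω, K h ω ∂P = ∫⁻ s, ∫⁻ ω, ‖f (h + s) ω - f s ω‖ₑ ^ 2 ∂P :=
      (lintegral_lintegral_swap (μ := volume) (ν := P)
        (f := fun s ω => ‖f (h + s) ω - f s ω‖ₑ ^ 2) (hdm h).aemeasurable).symm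
    have e2 : D h * v ≤ ∫⁻ ω, K h ω ∂P := by
      rw [e1, ← lintegral_indicator_const measurableSet_ball]
      refine lintegral_mono fun s => ?_
      by_cases hs : s ∈ Metric.ball (0 : Fin d → ℝ) 1
      · have hs2 : s ∈ B := Metric.ball_subset_ball (by norm_num) hs
        have hs3 : h + s ∈ B := by
          simp only [B, mem_ball_zero_iff] at *
          exact (norm_add_le _ _).trans_lt (by linarith)
        simp only [f, Set.indicator_of_mem hs, Set.indicator_of_mem hs2,
          Set.indicator_of_mem hs3, s1]
        exact le_rfl
      · simp [Set.indicator_of_notMem hs]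
    calc D h = v⁻¹ * (D h * v) := by
          rw [mul_comm (D h), ← mul_assoc, ENNReal.inv_mul_cancel hv0 hvt, one_mul]
      _ ≤ _ := by gcongr
  have hDt : Tendsto D (nhds 0) (nhds 0) := by
    have h1 : Tendsto (fun h => v⁻¹ * ∫⁻ ω, K h ω ∂P) (nhds 0) (nhds 0) := by
      simpa using ENNReal.Tendsto.const_mul (a := v⁻¹) hKt (Or.inr (ENNReal.inv_ne_top.2 hv0))
    refine tendsto_of_tendsto_of_tendsto_of_le_of_le' tendsto_const_nhds h1
      (Eventually.of_forall fun _ => bot_le) ?_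
    filter_upwards [Metric.ball_mem_nhds (0 : Fin d → ℝ) one_pos] with h hh using hle h hh
  intro t₀
  have hI : ∀ t, ∫ ω, (X t ω - X t₀ ω) ^ 2 ∂P = (D (t - t₀)).toReal := by
    intro t
    have hms : Measurable (fun ω => (X t ω - X t₀ ω) ^ 2) := ((hX t).sub (hX t₀)).pow_const 2
    rw [integral_eq_lintegral_of_nonneg_ae (Eventually.of_forall fun ω => sq_nonneg _)
      hms.aestronglyMeasurable]
    simp only [hen]
    have := s1 (t - t₀) t₀
    rw [sub_add_cancel] at this
    rw [this]
  simp only [hI]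
  have hsub : Tendsto (fun t : Fin d → ℝ => t - t₀) (nhds t₀) (nhds 0) := by
    have : Continuous (fun t : Fin d → ℝ => t - t₀) := by fun_prop
    simpa using this.tendsto t₀
  have := (ENNReal.tendsto_toReal ENNReal.zero_ne_top).comp (hDt.comp hsub)
  simpa [Function.comp_def] using this
end

section
/- Let d ≥ 1, let (Ω, F, P) be a probability space, and let φ : ℝ^d × Ω → Ω be a jointly measurable map such that φ(0, ω) = ω and φ(u + v, ω) = φ(u, φ(v, ω)) for all u, v ∈ ℝ^d and ω ∈ Ω, and such that for every t ∈ ℝ^d the map φ_t := φ(t, ·) is measure-preserving (the pushforward of P under φ_t equals P). Then for every measurable f : Ω → ℝ and every t₀ ∈ ℝ^d, f ∘ φ_t converges to f ∘ φ_{t₀} in probability as t → t₀: for every ε > 0, P(|f(φ(t, ·)) − f(φ(t₀, ·))| > ε) → 0 as t → t₀. -/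
open MeasureTheory Filter


lemma aux_translate_s7 {d : ℕ} (S : Set (Fin d → ℝ)) (hS : MeasurableSet S) (t₀ : Fin d → ℝ) :
    Tendsto (fun t : Fin d → ℝ =>
      (volume.restrict (Metric.ball (0 : Fin d → ℝ) 1)) {s | t + s ∈ S ∧ t₀ + s ∉ S})
      (nhds t₀) (nhds 0) := by
  let g : (Fin d → ℝ) → C(Fin d → ℝ, Fin d → ℝ) := fun t => ⟨fun s => t + s, by fun_prop⟩
  have hg : Continuous g := by
    apply ContinuousMap.continuous_of_continuous_uncurry
    show Continuous (fun p : (Fin d → ℝ) × (Fin d → ℝ) => p.1 + p.2)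
    fun_prop
  have hmp : ∀ t, MeasurePreserving (g t) volume volume := fun t =>
    measurePreserving_add_left volume t
  have hS' : MeasurableSet (S ∩ Metric.ball t₀ 2) := hS.inter measurableSet_ball
  have key := tendsto_measure_symmDiff_preimage_nhds_zero (hg.tendsto t₀)
    (.of_forall hmp) (hmp t₀) hS'.nullMeasurableSet
    (measure_ne_top_of_subset Set.inter_subset_right measure_ball_lt_top.ne)
  refine tendsto_of_tendsto_of_tendsto_of_le_of_le' tendsto_const_nhds key
    (.of_forall fun _ => zero_le) ?_
  filter_upwards [Metric.ball_mem_nhds t₀ one_pos] with t ht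
  rw [Measure.restrict_apply' measurableSet_ball]
  apply measure_mono
  rintro s ⟨⟨h1, h2⟩, h3⟩
  left
  refine ⟨⟨h1, ?_⟩, fun h => h2 h.1⟩
  show t + s ∈ Metric.ball t₀ 2
  rw [mem_ball_iff_norm] at ht h3 ⊢
  rw [sub_zero] at h3
  have : t + s - t₀ = (t - t₀) + s := by abel
  rw [this]
  exact (norm_add_le _ _).trans_lt (by linarith)

lemma aux_set {d : ℕ} {Ω : Type*} [MeasurableSpace Ω] (P : Measure Ω) [IsProbabilityMeasure P]
    (φ : (Fin d → ℝ) → Ω → Ω)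
    (hφmeas : Measurable (Function.uncurry φ))
    (hφadd : ∀ (u v : Fin d → ℝ) (ω : Ω), φ (u + v) ω = φ u (φ v ω))
    (hφmp : ∀ t : Fin d → ℝ, MeasurePreserving (φ t) P P)
    (E : Set Ω) (hE : MeasurableSet E) (t₀ : Fin d → ℝ) :
    Tendsto (fun t => P {ω | φ t ω ∈ E ∧ φ t₀ ω ∉ E}) (nhds t₀) (nhds 0) := by
  set μ : Measure (Fin d → ℝ) := volume.restrict (Metric.ball (0 : Fin d → ℝ) 1) with hμ
  haveI : IsFiniteMeasure μ := ⟨by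
    rw [hμ, Measure.restrict_apply_univ]; exact measure_ball_lt_top⟩
  have hc0 : μ Set.univ ≠ 0 := by
    rw [hμ, Measure.restrict_apply_univ]; exact (Metric.measure_ball_pos _ _ one_pos).ne'
  have hc1 : μ Set.univ ≠ ⊤ := measure_ne_top _ _
  have hm : ∀ t : Fin d → ℝ, Measurable (fun p : (Fin d → ℝ) × Ω => φ (t + p.1) p.2) := fun t =>
    hφmeas.comp (((measurable_const.add measurable_fst)).prodMk measurable_snd)
  have hG : ∀ t, MeasurableSet
      {p : (Fin d → ℝ) × Ω | φ (t + p.1) p.2 ∈ E ∧ φ (t₀ + p.1) p.2 ∉ E} := fun t =>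
    (hm t hE).inter (hm t₀ hE).compl
  have hA : ∀ t, MeasurableSet {ω | φ t ω ∈ E ∧ φ t₀ ω ∉ E} := fun t =>
    ((hφmp t).measurable hE).inter ((hφmp t₀).measurable hE).compl
  have h1 : ∀ t, P {ω | φ t ω ∈ E ∧ φ t₀ ω ∉ E} * μ Set.univ
      = ∫⁻ ω, μ {s | φ (t + s) ω ∈ E ∧ φ (t₀ + s) ω ∉ E} ∂P := by
    intro t
    have e1 := Measure.prod_apply (μ := μ) (ν := P) (hG t)
    have e2 := Measure.prod_apply_symm (μ := μ) (ν := P) (hG t)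
    have e3 : ∀ s, P (Prod.mk s ⁻¹'
        {p : (Fin d → ℝ) × Ω | φ (t + p.1) p.2 ∈ E ∧ φ (t₀ + p.1) p.2 ∉ E})
        = P {ω | φ t ω ∈ E ∧ φ t₀ ω ∉ E} := by
      intro s
      rw [← (hφmp s).measure_preimage (hA t).nullMeasurableSet]
      congr 1
      ext ω
      simp [hφadd]
    simp_rw [e3] at e1
    rw [lintegral_const] at e1
    rw [← e1, e2]
    rfl
  have h2 : Tendsto (fun t => ∫⁻ ω, μ {s | φ (t + s) ω ∈ E ∧ φ (t₀ + s) ω ∉ E} ∂P)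
      (nhds t₀) (nhds (∫⁻ _, 0 ∂P)) := by
    refine tendsto_lintegral_filter_of_dominated_convergence (fun _ => μ Set.univ)
      (.of_forall fun t => measurable_measure_prodMk_right (hG t))
      (.of_forall fun t => .of_forall fun ω => measure_mono (Set.subset_univ _)) ?_
      (.of_forall fun ω => ?_)
    · simpa using hc1
    · exact aux_translate_s7 {s | φ s ω ∈ E} (hφmeas.comp measurable_prodMk_right hE) t₀
  have h3 : ∀ t, P {ω | φ t ω ∈ E ∧ φ t₀ ω ∉ E}
      = (∫⁻ ω, μ {s | φ (t + s) ω ∈ E ∧ φ (t₀ + s) ω ∉ E} ∂P) * (μ Set.univ)⁻¹ := by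
    intro t
    rw [← h1, mul_assoc, ENNReal.mul_inv_cancel hc0 hc1, mul_one]
  simp_rw [h3]
  have := ENNReal.Tendsto.mul_const h2 (b := (μ Set.univ)⁻¹)
    (Or.inr (ENNReal.inv_ne_top.2 hc0))
  simpa using this

/-- For a jointly measurable measure-preserving `ℝ^d`-action `φ` on a
probability space and any measurable `f : Ω → ℝ`, `f ∘ φ_t → f ∘ φ_{t₀}` in probability
as `t → t₀`. -/
theorem measurePreserving_action_continuous_in_probability
    (d : ℕ) (hd : 1 ≤ d)
    {Ω : Type*} [MeasurableSpace Ω] (P : Measure Ω) [IsProbabilityMeasure P]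
    (φ : (Fin d → ℝ) → Ω → Ω)
    (hφmeas : Measurable (Function.uncurry φ))
    (hφ0 : ∀ ω, φ 0 ω = ω)
    (hφadd : ∀ (u v : Fin d → ℝ) (ω : Ω), φ (u + v) ω = φ u (φ v ω))
    (hφmp : ∀ t : Fin d → ℝ, MeasurePreserving (φ t) P P) :
    ∀ (f : Ω → ℝ), Measurable f →
      ∀ (t₀ : Fin d → ℝ) (ε : ℝ), 0 < ε →
        Tendsto (fun t : Fin d → ℝ => P {ω | ε < |f (φ t ω) - f (φ t₀ ω)|})
          (nhds t₀) (nhds 0) := by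
  intro f hf t₀ ε hε
  let E : ℤ → Set Ω := fun k => {ω | ⌊f ω / ε⌋ = k}
  have hE : ∀ k, MeasurableSet (E k) := fun k =>
    (hf.div_const ε).floor (measurableSet_singleton k)
  have hlim : Tendsto (fun t => ∫⁻ k, P {ω | φ t ω ∈ E k ∧ φ t₀ ω ∉ E k} ∂Measure.count)
      (nhds t₀) (nhds (∫⁻ _ : ℤ, 0 ∂Measure.count)) := by
    refine tendsto_lintegral_filter_of_dominated_convergence (fun k => P (E k))
      (.of_forall fun t => measurable_of_countable _)
      (.of_forall fun t => .of_forall fun k => ?_) ?_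
      (.of_forall fun k => aux_set P φ hφmeas hφadd hφmp (E k) (hE k) t₀)
    · rw [← (hφmp t).measure_preimage (hE k).nullMeasurableSet]
      exact measure_mono fun ω h => h.1
    · rw [lintegral_count, ← measure_iUnion _ hE]
      · exact measure_ne_top _ _
      · intro i j hij
        refine Set.disjoint_left.2 fun ω (h1 : _ = i) (h2 : _ = j) => hij (h1.symm.trans h2)
  rw [lintegral_zero] at hlim
  refine tendsto_of_tendsto_of_tendsto_of_le_of_le tendsto_const_nhds hlim
    (fun _ => zero_le) fun t => ?_
  show _ ≤ ∫⁻ k, P {ω | φ t ω ∈ E k ∧ φ t₀ ω ∉ E k} ∂Measure.count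
  rw [lintegral_count]
  refine le_trans (measure_mono ?_) (measure_iUnion_le _)
  intro ω (hω : ε < |f (φ t ω) - f (φ t₀ ω)|)
  refine Set.mem_iUnion.2 ⟨⌊f (φ t ω) / ε⌋, rfl, fun h => ?_⟩
  have h' := Int.abs_sub_lt_one_of_floor_eq_floor (show ⌊f (φ t₀ ω) / ε⌋ = ⌊f (φ t ω) / ε⌋ from h)
  rw [← sub_div, abs_div, abs_of_pos hε, div_lt_one hε, abs_sub_comm] at h'
  exact lt_asymm hω h'
end
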